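/- Define the map T of ℝ⁶ (coordinates A₀,A₁,A₂,F₀,F₁,F₂, indices modulo 3) by T(Aⱼ) = Aⱼ and T(Fⱼ) = Aⱼ + A_{j+1} + F_{j+1} + max(0, A_{j+2}+F_{j+2}, A_{j+2}+Aⱼ+F_{j+2}+Fⱼ) − max(0, Aⱼ+Fⱼ, Aⱼ+A_{j+1}+Fⱼ+F_{j+1}) for j ∈ {0,1,2}. Then T commutes with each of the piecewise linear maps S₀, S₁, S₂ and Π: T∘Sᵢ = Sᵢ∘T and T∘Π = Π∘T; that is, the extended affine Weyl group of type A₂⁽¹⁾ acts on the fourth ultra-discrete Painlevé equation uP_IV as a group of Bäcklund transformations. -/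

import Mathlib

/-!
Write `Dⱼ = max(0, Aⱼ+Fⱼ, Aⱼ+A_{j+1}+Fⱼ+F_{j+1})`, so that
`T(Fⱼ) = Aⱼ + A_{j+1} + F_{j+1} + D_{j+2} − Dⱼ`, and put `Pᵢ = max(0, Aᵢ+Fᵢ)`,
`Qᵢ = max(Aᵢ, Fᵢ)`, so that `Sᵢ` shifts `F_{i+1}` by `Qᵢ − Pᵢ` and `F_{i+2}` by `Pᵢ − Qᵢ`.
Commutation with `Π` is immediate from the cyclic symmetry of the formulas. For `Sᵢ`, distributivity
of `+` over `max` shows how the `Dⱼ` transform: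

* `Sᵢ(Dᵢ) = Dᵢ + Qᵢ − Aᵢ − Pᵢ` (`uD_uS_self`),
* `Sᵢ(D_{i+1}) + Pᵢ = Dᵢ + max(0, Aᵢ + T(Fᵢ))` (`uD_uS_add_one`),
* `Sᵢ(D_{i+2}) = D_{i+2}` (`uD_uS_add_two`).

Together with the relation `Aᵢ + Pᵢ + D_{i+1} = Dᵢ + max(Aᵢ, T(Fᵢ))` (`uD_relation`), these make
each of the three components `j = i, i+1, i+2` of `T ∘ Sᵢ = Sᵢ ∘ T` a linear identity. All four are
tropical images of subtraction-free polynomial identities for qP_IV.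
-/

/-!
The time evolution T of the fourth ultra-discrete Painlevé equation uP_IV
commutes with the ultra-discretized extended affine Weyl group action of
type A₂⁽¹⁾ on ℝ⁶ (coordinates (A₀,A₁,A₂,F₀,F₁,F₂), realized as pairs of
functions ZMod 3 → ℝ).
-/

noncomputable section

/-- The space ℝ⁶ with coordinates (A₀,A₁,A₂,F₀,F₁,F₂), indices mod 3. -/
abbrev UDSpace := (ZMod 3 → ℝ) × (ZMod 3 → ℝ)

/-- The Cartan matrix of type A₂⁽¹⁾: aᵢᵢ = 2, aᵢⱼ = −1 for i ≠ j. -/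
def cartanA2 (i j : ZMod 3) : ℤ := if i = j then 2 else -1

/-- The orientation matrix of the triangle: uᵢᵢ = 0, u_{i,i+1} = 1, u_{i,i+2} = −1. -/
def orientA2 (i j : ZMod 3) : ℤ := if j = i then 0 else if j = i + 1 then 1 else -1

/-- The ultra-discrete simple reflection Sᵢ:
Sᵢ(Aⱼ) = Aⱼ − Aᵢaᵢⱼ, Sᵢ(Fⱼ) = Fⱼ + uᵢⱼ(max(Aᵢ,Fᵢ) − max(0, Aᵢ+Fᵢ)). -/
def uS (i : ZMod 3) (x : UDSpace) : UDSpace :=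
  (fun j => x.1 j - (cartanA2 i j : ℝ) * x.1 i,
   fun j => x.2 j + (orientA2 i j : ℝ) *
     (max (x.1 i) (x.2 i) - max 0 (x.1 i + x.2 i)))

/-- The ultra-discrete diagram rotation Π: Π(Aⱼ) = A_{j+1}, Π(Fⱼ) = F_{j+1}. -/
def uPi (x : UDSpace) : UDSpace :=
  (fun j => x.1 (j + 1), fun j => x.2 (j + 1))

/-- The time evolution of the fourth ultra-discrete Painlevé equation uP_IV:
T(Aⱼ) = Aⱼ and T(Fⱼ) = Aⱼ + A_{j+1} + F_{j+1}
+ max(0, A_{j+2}+F_{j+2}, A_{j+2}+Aⱼ+F_{j+2}+Fⱼ)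
− max(0, Aⱼ+Fⱼ, Aⱼ+A_{j+1}+Fⱼ+F_{j+1}). -/
def uT (x : UDSpace) : UDSpace :=
  (x.1,
   fun j => x.1 j + x.1 (j + 1) + x.2 (j + 1) +
     max (max 0 (x.1 (j + 2) + x.2 (j + 2)))
         (x.1 (j + 2) + x.1 j + x.2 (j + 2) + x.2 j) -
     max (max 0 (x.1 j + x.2 j))
         (x.1 j + x.1 (j + 1) + x.2 j + x.2 (j + 1)))

/-! ### Indices modulo 3 -/

lemma idx_one_one (i : ZMod 3) : i + 1 + 1 = i + 2 := by ring

lemma idx_one_two (i : ZMod 3) : i + 1 + 2 = i := by revert i; decide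

lemma idx_two_one (i : ZMod 3) : i + 2 + 1 = i := by revert i; decide

lemma idx_two_two (i : ZMod 3) : i + 2 + 2 = i + 1 := by revert i; decide

lemma idx_cases (i j : ZMod 3) : j = i ∨ j = i + 1 ∨ j = i + 2 := by revert i j; decide

lemma cartanA2_self (i : ZMod 3) : cartanA2 i i = 2 := by revert i; decide

lemma cartanA2_add_one (i : ZMod 3) : cartanA2 i (i + 1) = -1 := by revert i; decide

lemma cartanA2_add_two (i : ZMod 3) : cartanA2 i (i + 2) = -1 := by revert i; decide

lemma orientA2_self (i : ZMod 3) : orientA2 i i = 0 := by revert i; decide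

lemma orientA2_add_one (i : ZMod 3) : orientA2 i (i + 1) = 1 := by revert i; decide

lemma orientA2_add_two (i : ZMod 3) : orientA2 i (i + 2) = -1 := by revert i; decide

/-! ### Components of the maps -/

/-- The tropical polynomial `Dⱼ = max(0, Aⱼ+Fⱼ, Aⱼ+A_{j+1}+Fⱼ+F_{j+1})` occurring in `uT`. -/
def uD (x : UDSpace) (j : ZMod 3) : ℝ :=
  max (max 0 (x.1 j + x.2 j)) (x.1 j + x.1 (j + 1) + x.2 j + x.2 (j + 1))

/-- The shift `max(Aᵢ, Fᵢ) − max(0, Aᵢ+Fᵢ)` by which `Sᵢ` changes `F_{i+1}`. -/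
def uShift (x : UDSpace) (i : ZMod 3) : ℝ :=
  max (x.1 i) (x.2 i) - max 0 (x.1 i + x.2 i)

lemma uT_fst (x : UDSpace) : (uT x).1 = x.1 := rfl

lemma uT_snd (x : UDSpace) (j : ZMod 3) :
    (uT x).2 j = x.1 j + x.1 (j + 1) + x.2 (j + 1) + uD x (j + 2) - uD x j := by
  simp only [uT, uD, idx_two_one]

lemma uS_fst_self (i : ZMod 3) (x : UDSpace) : (uS i x).1 i = -x.1 i := by
  simp only [uS, cartanA2_self]; push_cast; ring

lemma uS_fst_add_one (i : ZMod 3) (x : UDSpace) :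
    (uS i x).1 (i + 1) = x.1 (i + 1) + x.1 i := by
  simp only [uS, cartanA2_add_one]; push_cast; ring

lemma uS_fst_add_two (i : ZMod 3) (x : UDSpace) :
    (uS i x).1 (i + 2) = x.1 (i + 2) + x.1 i := by
  simp only [uS, cartanA2_add_two]; push_cast; ring

lemma uS_snd_self (i : ZMod 3) (x : UDSpace) : (uS i x).2 i = x.2 i := by
  simp only [uS, orientA2_self]; push_cast; ring

lemma uS_snd_add_one (i : ZMod 3) (x : UDSpace) :
    (uS i x).2 (i + 1) = x.2 (i + 1) + uShift x i := by
  simp only [uS, uShift, orientA2_add_one]; push_cast; ring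

lemma uS_snd_add_two (i : ZMod 3) (x : UDSpace) :
    (uS i x).2 (i + 2) = x.2 (i + 2) - uShift x i := by
  simp only [uS, uShift, orientA2_add_two]; push_cast; ring

/-! ### Transformation of the tropical polynomials -/

lemma uD_uS_self (i : ZMod 3) (x : UDSpace) :
    uD (uS i x) i = uD x i + uShift x i - x.1 i := by
  simp only [uD, uS_fst_self, uS_fst_add_one, uS_snd_self, uS_snd_add_one, uShift]
  generalize x.1 i = a, x.1 (i + 1) = b, x.2 i = f, x.2 (i + 1) = g
  simp only [max_def]
  split_ifs <;> linarith

lemma uD_uS_add_two (i : ZMod 3) (x : UDSpace) :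
    uD (uS i x) (i + 2) = uD x (i + 2) := by
  simp only [uD, idx_two_one, uS_fst_self, uS_fst_add_two, uS_snd_self, uS_snd_add_two, uShift]
  generalize x.1 i = a, x.1 (i + 2) = c, x.2 i = f, x.2 (i + 2) = h
  simp only [max_def]
  split_ifs <;> linarith

/-- Both sides are the tropicalization of the same polynomial, which splits as
`Dᵢ + aᵢ² aᵢ₊₁ fᵢ₊₁ Dᵢ₊₂`. -/
lemma uD_uS_add_one (i : ZMod 3) (x : UDSpace) :
    uD (uS i x) (i + 1) + max 0 (x.1 i + x.2 i) =
      uD x i + max 0 (x.1 i + (uT x).2 i) := by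
  have hD : uD x i + max 0 (x.1 i + (uT x).2 i) =
      max (uD x i) (x.1 i + x.1 i + x.1 (i + 1) + x.2 (i + 1) + uD x (i + 2)) := by
    rw [← max_add_add_left, uT_snd]
    congr 1 <;> ring
  rw [hD]
  simp only [uD, idx_one_one, idx_two_one, uS_fst_add_one, uS_fst_add_two, uS_snd_add_one,
    uS_snd_add_two, uShift]
  generalize x.1 i = a, x.1 (i + 1) = b, x.1 (i + 2) = c, x.2 i = f, x.2 (i + 1) = g,
    x.2 (i + 2) = h
  simp only [max_def]
  split_ifs <;> linarith

/-- Tropical form of `(1 + aᵢfᵢ) Dᵢ₊₁ = Dᵢ + aᵢ₊₁ fᵢ₊₁ Dᵢ₊₂`. -/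
lemma uD_relation (i : ZMod 3) (x : UDSpace) :
    x.1 i + max 0 (x.1 i + x.2 i) + uD x (i + 1) = uD x i + max (x.1 i) ((uT x).2 i) := by
  have hD : uD x i + max (x.1 i) ((uT x).2 i) =
      x.1 i + max (uD x i) (x.1 (i + 1) + x.2 (i + 1) + uD x (i + 2)) := by
    rw [← max_add_add_left, ← max_add_add_left, uT_snd]
    congr 1 <;> ring
  rw [hD]
  simp only [uD, idx_one_one, idx_two_one]
  generalize x.1 i = a, x.1 (i + 1) = b, x.1 (i + 2) = c, x.2 i = f, x.2 (i + 1) = g,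
    x.2 (i + 2) = h
  simp only [max_def]
  split_ifs <;> linarith

/-- the time evolution T of uP_IV commutes with each of the
piecewise linear maps S₀, S₁, S₂, Π; i.e. the extended affine Weyl group of
type A₂⁽¹⁾ acts on uP_IV as a group of Bäcklund transformations. -/
theorem uPIV_time_evolution_commutes_with_Weyl_action :
    (∀ i : ZMod 3, uT ∘ uS i = uS i ∘ uT) ∧ uT ∘ uPi = uPi ∘ uT := by
  refine ⟨fun i => ?_, ?_⟩
  · funext x
    refine Prod.ext rfl (funext fun j => ?_)
    have h0 := uD_uS_self i x
    have h1 := uD_uS_add_one i x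
    have h2 := uD_uS_add_two i x
    have hr := uD_relation i x
    have hT0 := uT_snd x i
    have hT1 := uT_snd x (i + 1)
    have hT2 := uT_snd x (i + 2)
    have hs : uShift x i = max (x.1 i) (x.2 i) - max 0 (x.1 i + x.2 i) := rfl
    have hsT : uShift (uT x) i = max (x.1 i) ((uT x).2 i) - max 0 (x.1 i + (uT x).2 i) := rfl
    simp only [idx_one_one, idx_one_two, idx_two_one, idx_two_two] at hT0 hT1 hT2
    simp only [Function.comp_apply]
    rcases idx_cases i j with rfl | rfl | rfl
    · rw [uS_snd_self, uT_snd, uS_fst_self, uS_fst_add_one, uS_snd_add_one]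
      linarith
    · rw [uS_snd_add_one, uT_snd, idx_one_one, idx_one_two, uS_fst_add_one, uS_fst_add_two,
        uS_snd_add_two]
      linarith
    · rw [uS_snd_add_two, uT_snd, idx_two_one, idx_two_two, uS_fst_add_two, uS_fst_self,
        uS_snd_self]
      linarith
  · funext x
    refine Prod.ext rfl (funext fun j => ?_)
    simp only [Function.comp_apply, uT, uPi, add_right_comm j 2 1]

end
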